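/- Let k >= 0, j >= 0, m >= 1 be integers and let r_1, ..., r_m be nonnegative integers with r_1 + 2*r_2 + ... + m*r_m = m; set r = r_1 + ... + r_m and n = 2m + kj. Then the number of k-paths P in P_{n,k}^{m,j} with \alpha_i(P) = r_i for every i equals (1/(m+1)) * C(m+j, m) * C(m+j+1, r) * r!/(r_1! r_2! ... r_m!). In particular (the case k = 0, j = 0), the number of Dyck paths of length 2m with \alpha_i = r_i for every i equals (1/(m+1)) * C(m+1, r) * r!/(r_1! ... r_m!). -/

import Mathlib

open Finset

inductive Step : Type
  | u | d | h
deriving DecidableEq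

/-- Lengths of maximal blocks of letters with `wt s ≠ none`, weighted by `wt`. -/
def runs (wt : Step → Option ℕ) : List Step → List ℕ
  | [] => []
  | s :: l =>
    match wt s, runs wt l with
    | none, r => r
    | some n, r =>
      match l with
      | [] => [n]
      | s' :: _ =>
        match wt s' with
        | none => n :: r
        | some _ =>
          match r with
          | a :: rest => (n + a) :: rest
          | [] => [n]

def uRuns : List Step → List ℕ :=
  runs (fun s => match s with | Step.u => some 1 | _ => none)

def uhRuns (k : ℕ) : List Step → List ℕ :=
  runs (fun s => match s with | Step.u => some 1 | Step.h => some k | Step.d => none)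

def alpha (i : ℕ) (w : List Step) : ℕ := (uRuns w).count i

def beta (i : ℕ) (w : List Step) : ℕ := (uRuns w).tail.count i

def IsNonneg (w : List Step) : Prop :=
  ∀ i : ℕ, (w.take i).count Step.d ≤ (w.take i).count Step.u

def pathSet (m j : ℕ) : Set (List Step) :=
  {w | w.count Step.u = m ∧ w.count Step.d = m ∧ w.count Step.h = j ∧ IsNonneg w}

/-- no horizontal step lies on the x-axis -/
def NoLowH (w : List Step) : Prop :=
  ∀ (i : ℕ) (hi : i < w.length), w[i]'hi = Step.h →
    (w.take i).count Step.u ≠ (w.take i).count Step.d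

def qSet (m j : ℕ) : Set (List Step) :=
  {w | w ∈ pathSet m j ∧ NoLowH w}

/-- normalized partial Bell polynomial (r!/m!) B_{m,r}(1!t₁,2!t₂,…) -/
def bellNorm (m r : ℕ) (t : ℕ → ℚ) : ℚ :=
  ∑ f : Fin m → Fin (m + 1),
    if (∑ i : Fin m, (f i : ℕ)) = r ∧ (∑ i : Fin m, ((i : ℕ) + 1) * (f i : ℕ)) = m then
      (r.factorial : ℚ) / (∏ i : Fin m, ((f i : ℕ).factorial : ℚ)) * ∏ i : Fin m, t ((i : ℕ) + 1) ^ (f i : ℕ)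
    else 0

/-- normalized potential polynomial  P_p^{(lam)}(1!t₁,2!t₂,…)/p! -/
def potential (lam p : ℕ) (t : ℕ → ℚ) : ℚ :=
  ∑ r ∈ Finset.range (p + 1), (Nat.choose lam r : ℚ) * bellNorm p r t


def encP : List (ℕ × Bool) → List Step
  | [] => []
  | (a, s) :: l => List.replicate a Step.u ++ (if s then Step.d else Step.h) :: encP l

/-- first passage from height h to 0 at the end -/
def FP : ℕ → List Step → Prop
  | h, [] => h = 0
  | h, Step.u :: w => 0 < h ∧ FP (h + 1) w
  | h, Step.d :: w => 0 < h ∧ FP (h - 1) w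
  | h, Step.h :: w => 0 < h ∧ FP h w

def goodP : ℕ → List (ℕ × Bool) → Prop
  | h, [] => h = 0
  | h, (a, s) :: l => 0 < h ∧ goodP (if s then h + a - 1 else h + a) l

lemma FP_rep (a h : ℕ) (w : List Step) (hw : ∀ x, FP x w → 0 < x) :
    FP h (List.replicate a Step.u ++ w) ↔ 0 < h ∧ FP (h + a) w := by
  induction a generalizing h with
  | zero => simpa using hw h
  | succ a ih =>
    simp only [List.replicate_succ, List.cons_append, FP, ih]
    rw [show h + 1 + a = h + (a + 1) by ring]
    constructor
    · rintro ⟨h1, -, h2⟩; exact ⟨h1, h2⟩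
    · rintro ⟨h1, h2⟩; exact ⟨h1, by omega, h2⟩

lemma good_iff (l : List (ℕ × Bool)) (h : ℕ) : goodP h l ↔ FP h (encP l) := by
  induction l generalizing h with
  | nil => rfl
  | cons p l ih =>
    obtain ⟨a, s⟩ := p
    cases s
    · simp only [encP, goodP]
      rw [FP_rep _ _ _ (by intro x; simp only [Bool.false_eq_true, if_false, FP]; exact fun h => h.1)]
      simp only [Bool.false_eq_true, if_false, FP, ih]
      constructor
      · rintro ⟨h1, h2⟩; exact ⟨h1, by omega, h2⟩
      · rintro ⟨h1, -, h2⟩; exact ⟨h1, h2⟩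
    · simp only [encP, goodP]
      rw [FP_rep _ _ _ (by intro x; simp only [if_true, FP]; exact fun h => h.1)]
      simp only [if_true, FP, ih]
      constructor
      · rintro ⟨h1, h2⟩; exact ⟨h1, by omega, h2⟩
      · rintro ⟨h1, -, h2⟩; exact ⟨h1, h2⟩

lemma forall_nat_cases (p : ℕ → Prop) : (∀ i, p i) ↔ p 0 ∧ ∀ i, p (i + 1) :=
  ⟨fun h => ⟨h 0, fun i => h _⟩, fun h i => by cases i; exact h.1; exact h.2 _⟩

lemma FP_append (w : List Step) (h : ℕ) : FP (h + 1) (w ++ [Step.d]) ↔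
    (∀ i : ℕ, (w.take i).count Step.d ≤ h + (w.take i).count Step.u) ∧
      h + w.count Step.u = w.count Step.d := by
  induction w generalizing h with
  | nil => simp [FP]
  | cons s w ih =>
    rw [forall_nat_cases]
    cases s
    · simp only [List.cons_append, FP, ih, List.take_succ_cons, List.count_cons]
      simp only [List.take_zero, List.count_nil]
      simp [add_assoc, add_comm, add_left_comm]
    · simp only [List.cons_append, FP, List.take_succ_cons, List.count_cons]
      simp only [List.take_zero, List.count_nil]
      cases h with
      | zero =>
        simp
        constructor
        · intro h
          exfalso
          cases w with
          | nil => simp [FP] at h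
          | cons s w => cases s <;> simp [FP] at h
        · rintro ⟨h, -⟩
          have := h 0
          simp at this
      | succ h =>
        simp only [Nat.add_sub_cancel, ih]
        simp [add_assoc, add_comm, add_left_comm]
        have e : ∀ a b : ℕ, h + (a + 1) = b + 1 ↔ h + a = b := by intros; omega
        have e2 : ∀ a b : ℕ, b < h + (a + 1) ↔ b ≤ h + a := by intros; omega
        simp [e, e2]
    · simp only [List.cons_append, FP, ih, List.take_succ_cons, List.count_cons]
      simp

lemma uRuns_d (l : List Step) : uRuns (Step.d :: l) = uRuns l := by simp [uRuns, runs]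
lemma uRuns_h (l : List Step) : uRuns (Step.h :: l) = uRuns l := by simp [uRuns, runs]
lemma uRuns_ud (l : List Step) : uRuns (Step.u :: Step.d :: l) = 1 :: uRuns l := by
  simp [uRuns, runs]
lemma uRuns_uh (l : List Step) : uRuns (Step.u :: Step.h :: l) = 1 :: uRuns l := by
  simp [uRuns, runs]
lemma uRuns_uu (l : List Step) : uRuns (Step.u :: Step.u :: l) =
    match uRuns (Step.u :: l) with
    | a :: rest => (1 + a) :: rest
    | [] => [1] := by
  rw [uRuns, runs]

lemma uRuns_append (w : List Step) : uRuns (w ++ [Step.d]) = uRuns w := by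
  induction w with
  | nil => simp [uRuns, runs]
  | cons s w ih =>
    cases s
    · cases w with
      | nil => simp [uRuns, runs]
      | cons s' w =>
        cases s'
        · simp only [List.cons_append] at *
          rw [uRuns_uu, uRuns_uu, ih]
        · simp only [List.cons_append, uRuns_d] at *
          rw [uRuns_ud, uRuns_ud, ih]
        · simp only [List.cons_append, uRuns_h] at *
          rw [uRuns_uh, uRuns_uh, ih]
    · simpa [uRuns_d] using ih
    · simpa [uRuns_h] using ih

lemma uRuns_rep (a : ℕ) (s : Bool) (l : List Step) :
    uRuns (List.replicate (a + 1) Step.u ++ (if s then Step.d else Step.h) :: l) =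
      (a + 1) :: uRuns l := by
  induction a with
  | zero => cases s <;> simp [uRuns_ud, uRuns_uh]
  | succ a ih =>
    rw [List.replicate_succ, List.replicate_succ, List.cons_append, List.cons_append, uRuns_uu,
      ← List.cons_append, ← List.replicate_succ, ih]
    simp [add_comm]

lemma uRuns_enc (l : List (ℕ × Bool)) :
    uRuns (encP l) = (l.map Prod.fst).filter (fun x => x ≠ 0) := by
  induction l with
  | nil => simp [encP, uRuns, runs]
  | cons p l ih =>
    obtain ⟨a, s⟩ := p
    cases a with
    | zero => cases s <;> simp [encP, uRuns_d, uRuns_h, ih]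
    | succ a =>
      rw [encP, uRuns_rep, ih]
      simp

lemma enc_u (l : List (ℕ × Bool)) : (encP l).count Step.u = (l.map Prod.fst).sum := by
  induction l with
  | nil => simp [encP]
  | cons p l ih => obtain ⟨a, s⟩ := p; cases s <;> simp [encP, ih, List.count_cons]

lemma enc_d (l : List (ℕ × Bool)) : (encP l).count Step.d = (l.map Prod.snd).count true := by
  induction l with
  | nil => simp [encP]
  | cons p l ih =>
    obtain ⟨a, s⟩ := p; cases s <;> simp [encP, ih, List.count_cons, List.count_replicate]

lemma enc_h (l : List (ℕ × Bool)) : (encP l).count Step.h = (l.map Prod.snd).count false := by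
  induction l with
  | nil => simp [encP]
  | cons p l ih =>
    obtain ⟨a, s⟩ := p; cases s <;> simp [encP, ih, List.count_cons, List.count_replicate]

lemma rep_inj (a b : ℕ) (s t : Bool) (v w : List Step)
    (h : List.replicate a Step.u ++ (if s then Step.d else Step.h) :: v =
      List.replicate b Step.u ++ (if t then Step.d else Step.h) :: w) :
    a = b ∧ s = t ∧ v = w := by
  induction a generalizing b with
  | zero =>
    cases b with
    | zero => cases s <;> cases t <;> simp_all
    | succ b => cases s <;> simp [List.replicate_succ] at h
  | succ a ih =>
    cases b with
    | zero => cases t <;> simp [List.replicate_succ] at h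
    | succ b =>
      simp only [List.replicate_succ, List.cons_append, List.cons.injEq, true_and] at h
      have := ih b h
      simpa using this

lemma enc_inj : Function.Injective encP := by
  intro l
  induction l with
  | nil =>
    intro l' h
    cases l' with
    | nil => rfl
    | cons p l' => obtain ⟨a, s⟩ := p; simp [encP] at h
  | cons p l ih =>
    intro l' h
    obtain ⟨a, s⟩ := p
    cases l' with
    | nil => simp [encP] at h
    | cons p l' =>
      obtain ⟨b, t⟩ := p
      obtain ⟨h1, h2, h3⟩ := rep_inj _ _ _ _ _ _ h
      rw [h1, h2, ih h3]

lemma enc_surj (w : List Step) : ∃ l, encP l = w ++ [Step.d] := by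
  induction w with
  | nil => exact ⟨[(0, true)], by simp [encP]⟩
  | cons s w ih =>
    obtain ⟨l, hl⟩ := ih
    cases s
    · cases l with
      | nil => simp [encP] at hl
      | cons p l =>
        obtain ⟨a, s⟩ := p
        exact ⟨(a + 1, s) :: l, by
          rw [List.cons_append, ← hl]; simp [encP, List.replicate_succ]⟩
    · exact ⟨(0, true) :: l, by simp [encP, hl]⟩
    · exact ⟨(0, false) :: l, by simp [encP, hl]⟩

def consE (p : ℕ × Bool) : List (ℕ × Bool) ↪ List (ℕ × Bool) :=
  ⟨fun l => p :: l, fun _ _ h => (List.cons.inj h).2⟩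

lemma consE_apply (p : ℕ × Bool) (l : List (ℕ × Bool)) : consE p l = p :: l := rfl

def GG : ℕ → ℕ → ℕ → Multiset ℕ → ℕ → Finset (List (ℕ × Bool))
  | 0, D, E, A, h => if D = 0 ∧ E = 0 ∧ A = 0 ∧ h = 0 then {[]} else ∅
  | N + 1, D, E, A, h => if h = 0 then ∅ else
      A.toFinset.biUnion fun a =>
        (if D = 0 then ∅ else (GG N (D - 1) E (A.erase a) (h + a - 1)).map (consE (a, true))) ∪
        (if E = 0 then ∅ else (GG N D (E - 1) (A.erase a) (h + a)).map (consE (a, false)))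

lemma mem_GG (N D E : ℕ) (A : Multiset ℕ) (h : ℕ) (l : List (ℕ × Bool)) :
    l ∈ GG N D E A h ↔ l.length = N ∧ ((l.map Prod.fst : List ℕ) : Multiset ℕ) = A ∧
      (l.map Prod.snd).count true = D ∧ (l.map Prod.snd).count false = E ∧ goodP h l := by
  induction N generalizing D E A h l with
  | zero =>
    cases l with
    | nil =>
      simp only [GG, goodP]
      split_ifs with hh
      · obtain ⟨rfl, rfl, rfl, rfl⟩ := hh; simp
      · simp only [Finset.notMem_empty, false_iff]
        rintro ⟨-, h1, h2, h3, h4⟩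
        exact hh ⟨by simpa using h2.symm, by simpa using h3.symm, by simpa using h1.symm, h4⟩
    | cons p l =>
      simp only [GG]
      split_ifs <;> simp
  | succ N ih =>
    simp only [GG]
    by_cases hh : h = 0
    · subst hh
      simp only [if_true, Finset.notMem_empty, false_iff]
      rintro ⟨h1, -, -, -, h2⟩
      cases l with
      | nil => simp at h1
      | cons p l => exact absurd h2.1 (by simp)
    · rw [if_neg hh]
      simp only [Finset.mem_biUnion, Finset.mem_union, Multiset.mem_toFinset]
      cases l with
      | nil =>
        simp only [List.length_nil]
        constructor
        · rintro ⟨a, -, h1 | h1⟩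
          · split_ifs at h1 <;> simp [consE_apply] at h1
          · split_ifs at h1 <;> simp [consE_apply] at h1
        · rintro ⟨h1, -⟩; omega
      | cons p l =>
        obtain ⟨b, s⟩ := p
        have hmem : ∀ (a : ℕ) (t : Bool) (S : Finset (List (ℕ × Bool))),
            (b, s) :: l ∈ S.map (consE (a, t)) ↔ b = a ∧ s = t ∧ l ∈ S := by
          intro a t S
          simp only [Finset.mem_map, consE_apply]
          constructor
          · rintro ⟨l', h1, h2⟩
            simp at h2
            obtain ⟨⟨rfl, rfl⟩, rfl⟩ := h2
            exact ⟨rfl, rfl, h1⟩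
          · rintro ⟨rfl, rfl, h⟩
            exact ⟨l, h, rfl⟩
        have hA : ((List.map Prod.fst ((b, s) :: l) : List ℕ) : Multiset ℕ) = A ↔
            b ∈ A ∧ ((List.map Prod.fst l : List ℕ) : Multiset ℕ) = A.erase b := by
          rw [List.map_cons, ← Multiset.cons_coe]
          constructor
          · rintro rfl; simp
          · rintro ⟨h1, h2⟩; rw [h2]; exact Multiset.cons_erase h1
        rw [hA]
        have hpos : 0 < h := by omega
        cases s
        · have : ∀ a, (((b, false) :: l ∈ if D = 0 then ∅ else
              (GG N (D - 1) E (A.erase a) (h + a - 1)).map (consE (a, true))) ↔ False) := by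
            intro a
            split_ifs
            · simp
            · rw [hmem]; simp
          simp only [this, false_or]
          by_cases hE : E = 0
          · simp [hE]
          · simp only [hE, if_false, hmem, ih]
            simp only [List.length_cons, List.map_cons, goodP]
            constructor
            · rintro ⟨a, h1, rfl, -, h2, h3, h4, h5, h6⟩
              exact ⟨by omega, ⟨h1, h3⟩, by simpa using h4, by simp; omega, hpos, by simpa using h6⟩
            · rintro ⟨h2, ⟨h1, h3⟩, h4, h5, -, h6⟩
              exact ⟨b, h1, rfl, trivial, by omega, h3, by simpa using h4, by simp at h5; omega,
                by simpa using h6⟩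
        · have : ∀ a, (((b, true) :: l ∈ if E = 0 then ∅ else
              (GG N D (E - 1) (A.erase a) (h + a)).map (consE (a, false))) ↔ False) := by
            intro a
            split_ifs
            · simp
            · rw [hmem]; simp
          simp only [this, or_false]
          by_cases hE : D = 0
          · simp [hE]
          · simp only [hE, if_false, hmem, ih]
            simp only [List.length_cons, List.map_cons, goodP]
            constructor
            · rintro ⟨a, h1, rfl, -, h2, h3, h4, h5, h6⟩
              exact ⟨by omega, ⟨h1, h3⟩, by simp; omega, by simpa using h5, hpos, by simpa using h6⟩
            · rintro ⟨h2, ⟨h1, h3⟩, h4, h5, -, h6⟩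
              exact ⟨b, h1, rfl, trivial, by omega, h3, by simp at h4; omega, by simpa using h5,
                by simpa using h6⟩

lemma card_GG_succ (N D E : ℕ) (A : Multiset ℕ) (h : ℕ) (hh : 0 < h) :
    (GG (N + 1) D E A h).card = ∑ a ∈ A.toFinset,
      ((if D = 0 then 0 else (GG N (D - 1) E (A.erase a) (h + a - 1)).card) +
       (if E = 0 then 0 else (GG N D (E - 1) (A.erase a) (h + a)).card)) := by
  have h0 : h ≠ 0 := by omega
  simp only [GG, h0, if_false]
  rw [Finset.card_biUnion]
  · apply Finset.sum_congr rfl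
    intro a _
    rw [Finset.card_union_of_disjoint]
    · congr 1 <;> split_ifs <;> simp
    · rw [Finset.disjoint_left]
      intro l h1 h2
      split_ifs at h1 h2
      all_goals simp [consE_apply] at h1 h2
      obtain ⟨x, -, rfl⟩ := h1
      obtain ⟨y, -, h3⟩ := h2
      simp at h3
  · intro a _ b _ hab
    have key : ∀ (c : ℕ) (l : List (ℕ × Bool)), l ∈ 
        (if D = 0 then ∅ else (GG N (D - 1) E (A.erase c) (h + c - 1)).map (consE (c, true))) ∪
        (if E = 0 then ∅ else (GG N D (E - 1) (A.erase c) (h + c)).map (consE (c, false))) →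
        l.head?.map Prod.fst = some c := by
      intro c l hl
      rw [Finset.mem_union] at hl
      rcases hl with hl | hl <;> split_ifs at hl
      all_goals simp [consE_apply] at hl
      all_goals
        obtain ⟨x, -, rfl⟩ := hl
        simp
    rw [Function.onFun, Finset.disjoint_left]
    intro l h1 h2
    have := (key a l h1).symm.trans (key b l h2)
    exact hab (by simpa using this)

def PiT (T : Finset ℕ) (A : Multiset ℕ) : ℕ := ∏ i ∈ T, (A.count i).factorial

lemma PiT_erase (T : Finset ℕ) (A : Multiset ℕ) (a : ℕ) (ha : a ∈ A) (hT : a ∈ T) :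
    PiT T A = A.count a * PiT T (A.erase a) := by
  unfold PiT
  rw [← Finset.mul_prod_erase T _ hT, ← Finset.mul_prod_erase T _ hT]
  rw [Multiset.count_erase_self, ← mul_assoc,
    Nat.mul_factorial_pred (by rw [Ne, Multiset.count_eq_zero]; simpa using ha)]
  congr 1
  apply Finset.prod_congr rfl
  intro i hi
  rw [Multiset.count_erase_of_ne (Finset.ne_of_mem_erase hi)]

lemma GG_zero (N D E : ℕ) (A : Multiset ℕ) : (GG (N + 1) D E A 0).card = 0 := by simp [GG]

lemma card_GG (T : Finset ℕ) (N D E : ℕ) (A : Multiset ℕ) (h : ℕ) (hT : ∀ a ∈ A, a ∈ T)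
    (hc : A.card = N + 1) (hDE : D + E = N + 1) (hs : h + A.sum = D) :
    (GG (N + 1) D E A h).card * (D.factorial * E.factorial * PiT T A) =
      h * N.factorial * (N + 1).factorial := by
  induction N generalizing D E A h with
  | zero =>
    rcases Nat.eq_zero_or_pos h with rfl | hpos
    · rw [GG_zero]; simp
    · obtain ⟨a, rfl⟩ := Multiset.card_eq_one.1 hc
      simp at hs hT
      have hD : D = 1 := by omega
      have h1 : h = 1 := by omega
      have ha : a = 0 := by omega
      have hE : E = 0 := by omega
      subst hD h1 ha hE
      rw [card_GG_succ _ _ _ _ _ hpos]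
      rw [PiT_erase T _ 0 (by simp) hT]
      simp [GG, PiT]
  | succ N ih =>
    rcases Nat.eq_zero_or_pos h with rfl | hpos
    · rw [GG_zero]; simp
    rw [card_GG_succ _ _ _ _ _ hpos, Finset.sum_mul]
    have key : ∀ a ∈ A.toFinset,
      (((if D = 0 then 0 else (GG (N + 1) (D - 1) E (A.erase a) (h + a - 1)).card) +
       (if E = 0 then 0 else (GG (N + 1) D (E - 1) (A.erase a) (h + a)).card)) *
        (D.factorial * E.factorial * PiT T A) : ℕ) =
       A.count a * ((D * (h + a - 1) + E * (h + a)) * (N.factorial * (N + 1).factorial)) := by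
      intro a ha
      rw [Multiset.mem_toFinset] at ha
      have hc' : (A.erase a).card = N + 1 := by rw [Multiset.card_erase_of_mem ha, hc]; rfl
      have hs' : a + (A.erase a).sum = A.sum := Multiset.sum_erase ha
      have hT' : ∀ b ∈ A.erase a, b ∈ T := fun b hb => hT b (Multiset.mem_of_mem_erase hb)
      rw [PiT_erase T A a ha (hT a ha), add_mul]
      have e1 : (if D = 0 then 0 else (GG (N + 1) (D - 1) E (A.erase a) (h + a - 1)).card) *
          (D.factorial * E.factorial * (A.count a * PiT T (A.erase a))) =
          A.count a * (D * (h + a - 1) * (N.factorial * (N + 1).factorial)) := by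
        rcases D with _ | D
        · simp
        · have := ih D E (A.erase a) (h + a - 1) hT' hc' (by omega) (by omega)
          simp only [Nat.add_sub_cancel, Nat.succ_ne_zero, if_false]
          rw [Nat.factorial_succ D]
          linear_combination (A.count a * (D + 1)) * this
      have e2 : (if E = 0 then 0 else (GG (N + 1) D (E - 1) (A.erase a) (h + a)).card) *
          (D.factorial * E.factorial * (A.count a * PiT T (A.erase a))) =
          A.count a * (E * (h + a) * (N.factorial * (N + 1).factorial)) := by
        rcases E with _ | E
        · simp
        · have := ih D E (A.erase a) (h + a) hT' hc' (by omega) (by omega)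
          simp only [Nat.add_sub_cancel, Nat.succ_ne_zero, if_false]
          rw [Nat.factorial_succ E]
          linear_combination (A.count a * (E + 1)) * this
      rw [e1, e2]; ring
    rw [Finset.sum_congr rfl key]
    have c1 : ∑ a ∈ A.toFinset, A.count a = N + 2 := by rw [Multiset.toFinset_sum_count_eq, hc]
    have c2 : ∑ a ∈ A.toFinset, A.count a * a = A.sum := by
      rw [Finset.sum_multiset_count]; simp
    obtain ⟨g, rfl⟩ : ∃ g, h = g + 1 := ⟨h - 1, by omega⟩
    have e3 : ∀ a, A.count a * ((D * (g + 1 + a - 1) + E * (g + 1 + a)) *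
        (N.factorial * (N + 1).factorial)) =
        ((D * g + E * (g + 1)) * (N.factorial * (N + 1).factorial)) * A.count a +
        ((D + E) * (N.factorial * (N + 1).factorial)) * (A.count a * a) := by
      intro a
      rw [show g + 1 + a - 1 = g + a by omega]; ring
    simp only [e3]
    rw [Finset.sum_add_distrib, ← Finset.mul_sum, ← Finset.mul_sum, c1, c2,
      Nat.factorial_succ (N + 1), Nat.factorial_succ N]
    generalize A.sum = S at *
    zify at hs hDE ⊢
    have hS : (S : ℤ) = D - g - 1 := by linarith
    have hE : (E : ℤ) = N + 2 - D := by linarith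
    rw [hS, hE]
    ring

def AA (j m : ℕ) (rv : ℕ → ℕ) : Multiset ℕ :=
  Multiset.replicate (m + j + 1 - ∑ i ∈ Finset.Icc 1 m, rv i) 0 +
    ∑ i ∈ Finset.Icc 1 m, Multiset.replicate (rv i) i

lemma AA_count (j m : ℕ) (rv : ℕ → ℕ) (i : ℕ) (hi : i ∈ Finset.Icc 1 m) :
    (AA j m rv).count i = rv i := by
  have : i ≠ 0 := by simp at hi; omega
  rw [AA, Multiset.count_add, Multiset.count_sum']
  simp only [Multiset.count_replicate]
  rw [if_neg this.symm]
  simp only [zero_add]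
  rw [Finset.sum_ite_eq' , if_pos hi]

lemma AA_count_zero (j m : ℕ) (rv : ℕ → ℕ) :
    (AA j m rv).count 0 = m + j + 1 - ∑ i ∈ Finset.Icc 1 m, rv i := by
  rw [AA, Multiset.count_add, Multiset.count_sum']
  simp only [Multiset.count_replicate]
  simp

lemma AA_mem (j m : ℕ) (rv : ℕ → ℕ) : ∀ a ∈ AA j m rv, a ∈ Finset.range (m + 1) := by
  intro a ha
  rw [AA, Multiset.mem_add, Multiset.mem_sum] at ha
  rw [Finset.mem_range]
  rcases ha with ha | ⟨i, hi, ha⟩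
  · rw [Multiset.eq_of_mem_replicate ha]; omega
  · rw [Multiset.eq_of_mem_replicate ha]; simp at hi; omega

lemma rv_le (m : ℕ) (rv : ℕ → ℕ) (hsum : ∑ i ∈ Finset.Icc 1 m, i * rv i = m) :
    ∑ i ∈ Finset.Icc 1 m, rv i ≤ m := by
  conv_rhs => rw [← hsum]
  apply Finset.sum_le_sum
  intro i hi
  exact Nat.le_mul_of_pos_left _ (by simp at hi; omega)

lemma AA_sum (j m : ℕ) (rv : ℕ → ℕ) (hsum : ∑ i ∈ Finset.Icc 1 m, i * rv i = m) :
    (AA j m rv).sum = m := by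
  rw [AA, Multiset.sum_add, Multiset.sum_sum]
  simp only [Multiset.sum_replicate, smul_eq_mul, mul_zero, zero_add]
  simpa [mul_comm] using hsum

lemma AA_card (j m : ℕ) (rv : ℕ → ℕ) (hsum : ∑ i ∈ Finset.Icc 1 m, i * rv i = m) :
    (AA j m rv).card = m + j + 1 := by
  have := rv_le m rv hsum
  rw [AA, Multiset.card_add, Multiset.card_sum]
  simp only [Multiset.card_replicate]
  omega

lemma range_split (m : ℕ) : Finset.range (m + 1) = insert 0 (Finset.Icc 1 m) := by
  ext i; simp; omega

lemma AA_unique (j m : ℕ) (rv : ℕ → ℕ) (hsum : ∑ i ∈ Finset.Icc 1 m, i * rv i = m)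
    (B : Multiset ℕ) (hB : B.sum = m) (hc : B.card = m + j + 1)
    (h : ∀ i ∈ Finset.Icc 1 m, B.count i = rv i) : B = AA j m rv := by
  have hmem : ∀ a ∈ B, a ∈ Finset.range (m + 1) := by
    intro a ha
    have := Multiset.single_le_sum (s := B) (by simp) a ha
    rw [Finset.mem_range]; omega
  have c1 := Multiset.sum_count_eq_card hmem
  have c2 := Multiset.sum_count_eq_card (AA_mem j m rv)
  rw [AA_card _ _ _ hsum, range_split, Finset.sum_insert (by simp),
    Finset.sum_congr rfl (AA_count j m rv)] at c2
  rw [hc, range_split, Finset.sum_insert (by simp), Finset.sum_congr rfl h] at c1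
  ext i
  by_cases hi : i ∈ Finset.range (m + 1)
  · rw [range_split, Finset.mem_insert] at hi
    rcases hi with rfl | hi
    · omega
    · rw [h i hi, AA_count _ _ _ _ hi]
  · rw [Multiset.count_eq_zero_of_notMem (fun hh => hi (hmem i hh)),
      Multiset.count_eq_zero_of_notMem (fun hh => hi (AA_mem j m rv i hh))]

lemma set_eq (j m : ℕ) (rv : ℕ → ℕ) (hsum : ∑ i ∈ Finset.Icc 1 m, i * rv i = m) :
    (fun w => w ++ [Step.d]) '' {w ∈ pathSet m j | ∀ i ∈ Finset.Icc 1 m, alpha i w = rv i} =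
      encP '' (GG (m + j + 1) (m + 1) j (AA j m rv) 1 : Set (List (ℕ × Bool))) := by
  have main : ∀ w l, encP l = w ++ [Step.d] →
      (w ∈ {w ∈ pathSet m j | ∀ i ∈ Finset.Icc 1 m, alpha i w = rv i} ↔
        l ∈ GG (m + j + 1) (m + 1) j (AA j m rv) 1) := by
    intro w l hl
    have hu := enc_u l
    have hd := enc_d l
    have hh := enc_h l
    have hr := uRuns_enc l
    have hg := good_iff l 1
    rw [hl] at hu hd hh hr hg
    rw [uRuns_append] at hr
    rw [show 1 = 0 + 1 from rfl, FP_append w 0] at hg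
    simp at hu hd hh
    have hlen : l.length = (l.map Prod.snd).count true + (l.map Prod.snd).count false := by
      rw [List.count_true_add_count_false, List.length_map]
    have hcount : ∀ i ∈ Finset.Icc 1 m, alpha i w =
        Multiset.count i ((l.map Prod.fst : List ℕ) : Multiset ℕ) := by
      intro i hi
      have : i ≠ 0 := by simp at hi; omega
      rw [alpha, hr, Multiset.coe_count, List.count_filter (by simpa using this)]
    rw [mem_GG]
    simp only [Set.mem_setOf_eq, pathSet, IsNonneg]
    simp only [zero_add] at hg
    constructor
    · rintro ⟨⟨h1, h2, h3, h4⟩, h5⟩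
      refine ⟨by omega, ?_, by omega, by omega, hg.2 ⟨h4, by omega⟩⟩
      apply AA_unique _ _ _ hsum
      · rw [Multiset.sum_coe]; omega
      · rw [Multiset.coe_card, List.length_map]; omega
      · intro i hi
        rw [← hcount i hi, h5 i hi]
    · rintro ⟨h1, h2, h3, h4, h5⟩
      have h6 := hg.1 h5
      refine ⟨⟨by omega, by omega, by omega, h6.1⟩, ?_⟩
      intro i hi
      rw [hcount i hi, h2, AA_count _ _ _ _ hi]
  ext v
  constructor
  · rintro ⟨w, hw, rfl⟩
    obtain ⟨l, hl⟩ := enc_surj w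
    exact ⟨l, (main w l hl).1 hw, hl⟩
  · rintro ⟨l, hl, rfl⟩
    have hg := ((mem_GG _ _ _ _ _ _).1 hl)
    -- the last letter of the encoding is a down-step
    have last : ∀ (v : List Step) (h : ℕ), FP (h + 1) v → ∃ w, v = w ++ [Step.d] := by
      intro v
      induction v with
      | nil => intro h hv; simp [FP] at hv
      | cons s v ih =>
        intro h hv
        cases s
        · obtain ⟨w, rfl⟩ := ih _ hv.2
          exact ⟨Step.u :: w, rfl⟩
        · have h2 := hv.2
          rw [Nat.add_sub_cancel] at h2
          cases h with
          | succ h =>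
            obtain ⟨w, rfl⟩ := ih _ h2
            exact ⟨Step.d :: w, rfl⟩
          | zero =>
            cases v with
            | nil => exact ⟨[], rfl⟩
            | cons t v => cases t <;> simp [FP] at h2
        · obtain ⟨w, rfl⟩ := ih _ hv.2
          exact ⟨Step.h :: w, rfl⟩
    obtain ⟨w, hw⟩ := last _ 0 ((good_iff l 1).1 hg.2.2.2.2)
    exact ⟨w, (main w l hw).2 hl, hw.symm⟩

lemma ncard_eq (j m : ℕ) (rv : ℕ → ℕ) (hsum : ∑ i ∈ Finset.Icc 1 m, i * rv i = m) :
    (Set.ncard {w ∈ pathSet m j | ∀ i ∈ Finset.Icc 1 m, alpha i w = rv i} : ℚ) =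
      (1 : ℚ) / (m + 1) * Nat.choose (m + j) m *
        Nat.choose (m + j + 1) (∑ i ∈ Finset.Icc 1 m, rv i) *
        ((∑ i ∈ Finset.Icc 1 m, rv i).factorial : ℚ) /
        ∏ i ∈ Finset.Icc 1 m, ((rv i).factorial : ℚ) := by
  have h1 := congrArg Set.ncard (set_eq j m rv hsum)
  rw [Set.ncard_image_of_injective _ (List.append_left_injective _),
    Set.ncard_image_of_injective _ enc_inj, Set.ncard_coe_finset] at h1
  rw [h1]
  have h2 := card_GG (Finset.range (m + 1)) (m + j) (m + 1) j (AA j m rv) 1 (AA_mem j m rv)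
    (AA_card j m rv hsum) (by omega) (by rw [AA_sum j m rv hsum]; omega)
  rw [PiT, range_split, Finset.prod_insert (by simp), AA_count_zero,
    Finset.prod_congr rfl (fun i hi => by rw [AA_count j m rv i hi])] at h2
  have hr := rv_le m rv hsum
  have c1 := Nat.add_choose_mul_factorial_mul_factorial m j
  have c2 := Nat.choose_mul_factorial_mul_factorial
    (show ∑ i ∈ Finset.Icc 1 m, rv i ≤ m + j + 1 by omega)
  generalize (GG (m + j + 1) (m + 1) j (AA j m rv) 1).card = g at *
  have hP : (∏ i ∈ Finset.Icc 1 m, ((rv i).factorial : ℚ)) ≠ 0 :=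
    Finset.prod_ne_zero_iff.2 fun i _ => by positivity
  generalize ∑ i ∈ Finset.Icc 1 m, rv i = r at *
  rw [← Nat.choose_symm_add] at c1
  rw [← c1, ← c2, Nat.factorial_succ] at h2
  have h3 : ((m.factorial * j.factorial * (m + j + 1 - r).factorial : ℕ) : ℚ) ≠ 0 := by
    have := m.factorial_pos; have := j.factorial_pos; have := (m + j + 1 - r).factorial_pos
    positivity
  have h4 := congrArg (Nat.cast : ℕ → ℚ) h2
  push_cast at h3 h4
  rw [eq_div_iff hP]
  have h5 : (m + 1 : ℚ) ≠ 0 := by positivity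
  have hx : (1 : ℚ) / (m + 1) * (m + 1) = 1 := by field_simp
  generalize (1 : ℚ) / (m + 1) = x at *
  apply mul_left_cancel₀ (mul_ne_zero h3 h5)
  linear_combination h4 - (m.factorial * j.factorial * (m + j + 1 - r).factorial : ℚ) *
    (m + j).choose m * (m + j + 1).choose r * r.factorial * hx

theorem stmt3 (k j m : ℕ) (hm : 1 ≤ m) (rv : ℕ → ℕ)
    (hsum : ∑ i ∈ Finset.Icc 1 m, i * rv i = m) :
    (Set.ncard {w ∈ pathSet m j | ∀ i ∈ Finset.Icc 1 m, alpha i w = rv i} : ℚ) =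
      (1 : ℚ) / (m + 1) * Nat.choose (m + j) m *
        Nat.choose (m + j + 1) (∑ i ∈ Finset.Icc 1 m, rv i) *
        ((∑ i ∈ Finset.Icc 1 m, rv i).factorial : ℚ) /
        ∏ i ∈ Finset.Icc 1 m, ((rv i).factorial : ℚ) ∧
    (Set.ncard {w ∈ pathSet m 0 | ∀ i ∈ Finset.Icc 1 m, alpha i w = rv i} : ℚ) =
      (1 : ℚ) / (m + 1) * Nat.choose (m + 1) (∑ i ∈ Finset.Icc 1 m, rv i) *
        ((∑ i ∈ Finset.Icc 1 m, rv i).factorial : ℚ) /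
        ∏ i ∈ Finset.Icc 1 m, ((rv i).factorial : ℚ) := by
  refine ⟨ncard_eq j m rv hsum, ?_⟩
  rw [ncard_eq 0 m rv hsum]
  simp
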